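/- Suppose that every integer n > 2 can be written as k + m with k and m positive integers such that p_k + 2 and p_{p_m} + 2 are both prime. Then there are infinitely many positive integers m with p_{p_m} + 2 prime; equivalently, there are infinitely many super twin prime pairs, i.e., pairs {p, p+2} with p, p+2 and π(p) all prime. -/

import Mathlib

/-- `nthPrime n` is the `n`-th prime `p_n`, so that `p_1 = 2`, `p_2 = 3`, etc. -/
noncomputable def nthPrime (n : ℕ) : ℕ := Nat.nth Nat.Prime (n - 1)

/-!
If only finitely many `m` were admissible, all at most `M`, the hypothesis would put a prime `p`
with `p + 2` prime into every window of about `M` consecutive primes, so that these primes would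
have positive density among the primes. They have density zero: modulo `q` they lie, up to finitely
many, in the classes `a` with both `a` and `a + 2` invertible. By Dirichlet's theorem these classes
hold a proportion `∏ (p - 2) / (p - 1)` of the primes when `q` is a product of odd primes `p`, and
this tends to zero because `∑ 1 / p` diverges. The density that makes both halves easy weights `n`
by `Λ n / n ^ x` and lets `x` tend to `1` from above.
-/

open Filter Set
open ArithmeticFunction (vonMangoldt vonMangoldt_nonneg)
open scoped Topology

section VonMangoldtDensity

variable {S T : Set ℕ} {x : ℝ}

/-- The general term `Λ n / n ^ x` of the Dirichlet series of the von Mangoldt function. -/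
noncomputable def vonMangoldtTerm (x : ℝ) (n : ℕ) : ℝ :=
  vonMangoldt n / (n : ℝ) ^ x

/-- The part `∑ n ∈ S, Λ n / n ^ x` of the Dirichlet series of `Λ` supported on the set `S`. -/
noncomputable def vonMangoldtSeries (S : Set ℕ) (x : ℝ) : ℝ :=
  ∑' n, S.indicator (vonMangoldtTerm x) n

/-- The set `S` has density `d` for the von Mangoldt weight: `(x - 1) ∑ n ∈ S, Λ n / n ^ x` tends to
`d` as `x` tends to `1` from above. This is a form of Dirichlet density, normalised so that `ℕ` and
the set of primes both have density `1`. -/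
def HasVonMangoldtDensity (S : Set ℕ) (d : ℝ) : Prop :=
  Tendsto (fun x : ℝ => (x - 1) * vonMangoldtSeries S x) (𝓝[>] 1) (𝓝 d)

lemma vonMangoldtTerm_nonneg (x : ℝ) (n : ℕ) : 0 ≤ vonMangoldtTerm x n :=
  div_nonneg vonMangoldt_nonneg (Real.rpow_nonneg n.cast_nonneg x)

lemma vonMangoldtTerm_anti_left (n : ℕ) : Antitone fun x => vonMangoldtTerm x n := by
  intro x y hxy
  rcases n.eq_zero_or_pos with rfl | hn
  · simp only [vonMangoldtTerm, ArithmeticFunction.map_zero, zero_div, le_refl]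
  · have hn₁ : (1 : ℝ) ≤ n := Nat.one_le_cast.mpr hn
    exact div_le_div_of_nonneg_left vonMangoldt_nonneg (by positivity)
      (Real.rpow_le_rpow_of_exponent_le hn₁ hxy)

lemma summable_vonMangoldtTerm (hx : 1 < x) : Summable (vonMangoldtTerm x) := by
  have abscissa_le_one : LSeries.abscissaOfAbsConv (fun n => (vonMangoldt n : ℂ)) ≤ 1 :=
    LSeries.abscissaOfAbsConv_le_of_forall_lt_LSeriesSummable' fun y hy =>
      ArithmeticFunction.LSeriesSummable_vonMangoldt (by exact_mod_cast hy)
  exact LSeries.summable_real_of_abscissaOfAbsConv_lt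
    (abscissa_le_one.trans_lt (by exact_mod_cast hx))

lemma indicator_vonMangoldtTerm_nonneg (S : Set ℕ) (x : ℝ) (n : ℕ) :
    0 ≤ S.indicator (vonMangoldtTerm x) n :=
  indicator_nonneg (fun n _ => vonMangoldtTerm_nonneg x n) n

lemma vonMangoldtSeries_nonneg (S : Set ℕ) (x : ℝ) : 0 ≤ vonMangoldtSeries S x :=
  tsum_nonneg (indicator_vonMangoldtTerm_nonneg S x)

lemma vonMangoldtSeries_le_add_diff (hx : 1 < x) :
    vonMangoldtSeries T x ≤ vonMangoldtSeries S x + vonMangoldtSeries (T \ S) x := by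
  have summable (U : Set ℕ) := (summable_vonMangoldtTerm hx).indicator U
  rw [vonMangoldtSeries, vonMangoldtSeries, vonMangoldtSeries,
    ← (summable S).tsum_add (summable (T \ S))]
  refine (summable T).tsum_le_tsum (fun n => ?_) ((summable S).add (summable (T \ S)))
  rw [← congrFun (indicator_union_of_disjoint disjoint_sdiff_right _) n, union_sdiff_self]
  exact indicator_le_indicator_apply_of_subset subset_union_right (vonMangoldtTerm_nonneg x n)

namespace HasVonMangoldtDensity

lemma biUnion {ι : Type*} {s : Finset ι} {S : ι → Set ℕ} {d : ι → ℝ}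
    (hdisj : (s : Set ι).PairwiseDisjoint S) (h : ∀ i ∈ s, HasVonMangoldtDensity (S i) (d i)) :
    HasVonMangoldtDensity (⋃ i ∈ s, S i) (∑ i ∈ s, d i) := by
  refine (tendsto_finsetSum s h).congr' ?_
  filter_upwards [self_mem_nhdsWithin] with x hx
  rw [← Finset.mul_sum]
  simp only [vonMangoldtSeries, Finset.indicator_biUnion s S hdisj]
  rw [Summable.tsum_finsetSum fun i _ => (summable_vonMangoldtTerm hx).indicator (S i)]

lemma zero_of_summable (h : Summable (S.indicator (vonMangoldtTerm 1))) :
    HasVonMangoldtDensity S 0 := by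
  have upper : Tendsto (fun x : ℝ => (x - 1) * vonMangoldtSeries S 1) (𝓝[>] 1) (𝓝 0) := by
    refine tendsto_nhdsWithin_of_tendsto_nhds (Continuous.tendsto' (by fun_prop) _ _ ?_)
    rw [sub_self, zero_mul]
  refine tendsto_of_tendsto_of_tendsto_of_le_of_le' tendsto_const_nhds upper ?_ ?_ <;>
    filter_upwards [self_mem_nhdsWithin] with x hx
  · exact mul_nonneg (sub_nonneg.mpr hx.le) (vonMangoldtSeries_nonneg S x)
  · refine mul_le_mul_of_nonneg_left ?_ (sub_nonneg.mpr hx.le)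
    exact ((summable_vonMangoldtTerm hx).indicator S).tsum_le_tsum
      (fun n => indicator_le_indicator (vonMangoldtTerm_anti_left n hx.le)) h

lemma zero_of_finite (h : S.Finite) : HasVonMangoldtDensity S 0 :=
  zero_of_summable <| summable_of_hasFiniteSupport <| h.subset support_indicator_subset

lemma zero_of_forall_exists_lt
    (h : ∀ ε > 0, ∃ S d, HasVonMangoldtDensity S d ∧ d < ε ∧ (T \ S).Finite) :
    HasVonMangoldtDensity T 0 := by
  refine tendsto_order.mpr ⟨fun a ha => ?_, fun ε hε => ?_⟩
  · filter_upwards [self_mem_nhdsWithin] with x hx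
    exact ha.trans_le (mul_nonneg (sub_nonneg.mpr hx.le) (vonMangoldtSeries_nonneg T x))
  · obtain ⟨S, d, hS, hd, hfin⟩ := h ε hε
    have hsum := hS.add (zero_of_finite hfin)
    rw [add_zero] at hsum
    filter_upwards [self_mem_nhdsWithin, hsum.eventually_lt_const hd] with x hx hlt
    rw [← mul_add] at hlt
    exact (mul_le_mul_of_nonneg_left (vonMangoldtSeries_le_add_diff hx)
      (sub_nonneg.mpr hx.le)).trans_lt hlt

end HasVonMangoldtDensity

end VonMangoldtDensity

section ResidueClasses

variable {q : ℕ}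

lemma LSeries_ofReal_eq_tsum {f : ℕ → ℝ} (hf : f 0 = 0) (x : ℝ) :
    LSeries (fun n => (f n : ℂ)) x = ((∑' n, f n / (n : ℝ) ^ x : ℝ) : ℂ) := by
  rw [LSeries, Complex.ofReal_tsum]
  refine tsum_congr fun n => ?_
  rcases eq_or_ne n 0 with rfl | hn
  · rw [LSeries.term_zero, hf, zero_div, Complex.ofReal_zero]
  · rw [LSeries.term_of_ne_zero hn, Complex.ofReal_div, Complex.ofReal_cpow n.cast_nonneg,
      Complex.ofReal_natCast]

open ArithmeticFunction.vonMangoldt in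
lemma ofReal_vonMangoldtSeries_residueClass (a : ZMod q) (x : ℝ) :
    (vonMangoldtSeries {n | (n : ZMod q) = a} x : ℂ) =
      LSeries (fun n => (residueClass a n : ℂ)) x := by
  rw [LSeries_ofReal_eq_tsum (residueClass_apply_zero a), vonMangoldtSeries]
  congr 2 with n
  by_cases hn : (n : ZMod q) = a <;> simp [residueClass, vonMangoldtTerm, indicator, hn]

open ArithmeticFunction.vonMangoldt in
theorem hasVonMangoldtDensity_residueClass [NeZero q] {a : ZMod q} (ha : IsUnit a) :
    HasVonMangoldtDensity {n | (n : ZMod q) = a} (q.totient : ℝ)⁻¹ := by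
  have regular_part : Tendsto (fun x : ℝ => ((x : ℂ) - 1) * LFunctionResidueClassAux a x)
      (𝓝[>] 1) (𝓝 0) := by
    have hmaps : MapsTo ((↑) : ℝ → ℂ) (Ici 1) {s | 1 ≤ s.re} := fun x hx => hx
    have hcont : ContinuousOn (fun x : ℝ => ((x : ℂ) - 1) * LFunctionResidueClassAux a x) (Ici 1) :=
      (by fun_prop : Continuous fun x : ℝ => (x : ℂ) - 1).continuousOn.mul
        ((continuousOn_LFunctionResidueClassAux a).comp
          Complex.continuous_ofReal.continuousOn hmaps)
    simpa using (hcont 1 self_mem_Ici).mono_left (nhdsWithin_mono 1 Ioi_subset_Ici_self)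
  rw [HasVonMangoldtDensity, ← tendsto_ofReal_iff]
  have hlim := regular_part.add_const (q.totient : ℂ)⁻¹
  rw [zero_add, ← Complex.ofReal_natCast, ← Complex.ofReal_inv] at hlim
  refine hlim.congr' ?_
  filter_upwards [self_mem_nhdsWithin] with x hx
  have hx₀ : (x : ℂ) - 1 ≠ 0 := by exact_mod_cast (sub_pos.mpr hx).ne'
  have haux : LFunctionResidueClassAux a x =
      vonMangoldtSeries {n | (n : ZMod q) = a} x - (q.totient : ℂ)⁻¹ / (x - 1) := by
    rw [ofReal_vonMangoldtSeries_residueClass]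
    exact eqOn_LFunctionResidueClassAux ha hx
  rw [haux, mul_sub, mul_div_cancel₀ _ hx₀]
  push_cast
  ring

theorem hasVonMangoldtDensity_residueClasses [NeZero q] {A : Set (ZMod q)}
    (hA : ∀ a ∈ A, IsUnit a) :
    HasVonMangoldtDensity {n | (n : ZMod q) ∈ A} (A.ncard / q.totient) := by
  classical
  have hdisj : (A.toFinset : Set (ZMod q)).PairwiseDisjoint
      fun a => {n : ℕ | (n : ZMod q) = a} := fun a _ b _ hab =>
    disjoint_left.mpr fun n (hna : (n : ZMod q) = a) hnb => hab (hna.symm.trans hnb)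
  convert HasVonMangoldtDensity.biUnion hdisj fun a ha =>
    hasVonMangoldtDensity_residueClass (hA a (mem_toFinset.mp ha)) using 1
  · ext n
    simp
  · rw [Finset.sum_const, nsmul_eq_mul, div_eq_mul_inv, ncard_eq_toFinset_card']

theorem hasVonMangoldtDensity_univ : HasVonMangoldtDensity univ 1 := by
  simpa [ncard_univ] using hasVonMangoldtDensity_residueClasses (q := 1) (A := univ) fun a _ =>
    isUnit_of_subsingleton a

lemma HasVonMangoldtDensity.compl {S : Set ℕ} {d : ℝ} (h : HasVonMangoldtDensity S d) :
    HasVonMangoldtDensity Sᶜ (1 - d) := by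
  refine (hasVonMangoldtDensity_univ.sub h).congr' ?_
  filter_upwards [self_mem_nhdsWithin] with x hx
  have hs := summable_vonMangoldtTerm hx
  rw [← mul_sub]
  simp only [vonMangoldtSeries, indicator_univ, indicator_compl, Pi.sub_apply]
  rw [hs.tsum_sub (hs.indicator S)]

open ArithmeticFunction.vonMangoldt in
theorem hasVonMangoldtDensity_primes : HasVonMangoldtDensity {p | p.Prime} 1 := by
  have hnonprime : HasVonMangoldtDensity {n | ¬ n.Prime} 0 := by
    refine .zero_of_summable <|
      (summable_residueClass_non_primes_div (1 : ZMod 1)).congr fun n => ?_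
    have hmod : (n : ZMod 1) = 1 := Subsingleton.elim _ _
    by_cases hn : n.Prime <;> simp [vonMangoldtTerm, hn, hmod]
  simpa [compl_ofPred] using hnonprime.compl

end ResidueClasses

section PrimePairs

/-- The residue classes `a` modulo `q` with `a` and `a + h` both invertible. They contain all but
finitely many of the primes `p` for which `p + h` is prime. -/
def admissibleResidues (q h : ℕ) : Set (ZMod q) :=
  {a | IsUnit a ∧ IsUnit (a + h)}

variable {h : ℕ}

lemma ncard_admissibleResidues_mul {m n : ℕ} (hmn : m.Coprime n) (h : ℕ) :
    (admissibleResidues (m * n) h).ncard =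
      (admissibleResidues m h).ncard * (admissibleResidues n h).ncard := by
  let crt := ZMod.chineseRemainder hmn
  have hpre : admissibleResidues (m * n) h =
      crt ⁻¹' (admissibleResidues m h ×ˢ admissibleResidues n h) := by
    ext a
    have ha : IsUnit a ↔ IsUnit (crt a).1 ∧ IsUnit (crt a).2 := by
      rw [← Prod.isUnit_iff, MulEquiv.isUnit_map]
    have hah : IsUnit (a + h) ↔ IsUnit ((crt a).1 + h) ∧ IsUnit ((crt a).2 + h) := by
      rw [← MulEquiv.isUnit_map crt, Prod.isUnit_iff, map_add, map_natCast, Prod.fst_add,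
        Prod.snd_add, Prod.fst_natCast, Prod.snd_natCast]
    simp only [admissibleResidues, mem_ofPred_eq, mem_preimage, mem_prod, ha, hah]
    exact and_and_and_comm
  rw [hpre, ncard_preimage_of_injective_subset_range crt.injective
    (crt.surjective.range_eq ▸ subset_univ _), ncard_prod]

lemma ncard_admissibleResidues_prime {p : ℕ} (hp : p.Prime) (hph : ¬ p ∣ h) :
    (admissibleResidues p h).ncard = p - 2 := by
  have := Fact.mk hp
  have heq : admissibleResidues p h = {0, -(h : ZMod p)}ᶜ := by
    ext a
    simp [admissibleResidues, isUnit_iff_ne_zero, add_eq_zero_iff_eq_neg]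
  have hne : (0 : ZMod p) ≠ -h := by
    rwa [ne_comm, neg_ne_zero, Ne, ZMod.natCast_eq_zero_iff]
  rw [heq, ncard_compl, Nat.card_zmod, ncard_pair hne]

lemma ncard_admissibleResidues_prime_le {p : ℕ} (hp : p.Prime) (hph : ¬ p ∣ h) :
    ((admissibleResidues p h).ncard : ℝ) ≤ Real.exp (-(1 / p)) * p.totient := by
  have hp₂ : (2 : ℝ) ≤ p := by exact_mod_cast hp.two_le
  rw [ncard_admissibleResidues_prime hp hph, Nat.totient_prime hp, Nat.cast_sub hp.two_le,
    Nat.cast_pred hp.pos, Nat.cast_ofNat]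
  calc (p : ℝ) - 2 ≤ p - 2 + 1 / p := le_add_of_nonneg_right (by positivity)
    _ = (1 - 1 / p) * (p - 1) := by field_simp; ring
    _ ≤ Real.exp (-(1 / p)) * (p - 1) :=
        mul_le_mul_of_nonneg_right (Real.one_sub_le_exp_neg _) (by linarith)

lemma ncard_admissibleResidues_prod_le {s : Finset ℕ} (hs : ∀ p ∈ s, p.Prime ∧ ¬ p ∣ h) :
    ((admissibleResidues (∏ p ∈ s, p) h).ncard : ℝ) ≤
      Real.exp (-∑ p ∈ s, (1 / p : ℝ)) * (∏ p ∈ s, p).totient := by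
  induction s using Finset.induction_on with
  | empty =>
    have : Subsingleton (ZMod (∏ p ∈ (∅ : Finset ℕ), p)) :=
      inferInstanceAs (Subsingleton (ZMod 1))
    simpa using ncard_le_one_of_subsingleton (admissibleResidues (∏ p ∈ (∅ : Finset ℕ), p) h)
  | insert p s hps ih =>
    obtain ⟨⟨hp, hph⟩, hs⟩ := Finset.forall_mem_insert _ _ _ |>.mp hs
    have hcop : p.Coprime (∏ r ∈ s, r) := Nat.Coprime.prod_right fun r hr =>
      (Nat.coprime_primes hp (hs r hr).1).mpr fun hpr => hps (hpr ▸ hr)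
    rw [Finset.prod_insert hps, Finset.sum_insert hps, ncard_admissibleResidues_mul hcop,
      Nat.totient_mul hcop, neg_add, Real.exp_add, Nat.cast_mul, Nat.cast_mul, mul_mul_mul_comm]
    exact mul_le_mul (ncard_admissibleResidues_prime_le hp hph) (ih hs) (by positivity)
      (by positivity)

lemma not_summable_one_div_primes_not_dvd (hh : h ≠ 0) :
    ¬ Summable ({p | p.Prime ∧ ¬ p ∣ h}.indicator fun p : ℕ => (1 / p : ℝ)) := by
  refine fun hsum => not_summable_one_div_on_primes (hsum.congr_cofinite ?_)
  filter_upwards [h.divisors.finite_toSet.compl_mem_cofinite] with p hp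
  have hph : ¬ p ∣ h := fun hdvd => hp (Nat.mem_divisors.mpr ⟨hdvd, hh⟩)
  simp [indicator, hph]

lemma exists_ncard_admissibleResidues_div_totient_lt (hh : h ≠ 0) {ε : ℝ} (hε : 0 < ε) :
    ∃ q ≠ 0, ((admissibleResidues q h).ncard : ℝ) / q.totient < ε := by
  obtain ⟨u, hu⟩ : ∃ u : Finset ℕ, -Real.log ε <
      ∑ p ∈ u, {p | p.Prime ∧ ¬ p ∣ h}.indicator (fun p : ℕ => (1 / p : ℝ)) p := by
    by_contra! hbdd
    exact not_summable_one_div_primes_not_dvd hh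
      (summable_of_sum_le (fun p => indicator_nonneg (fun _ _ => by positivity) p) hbdd)
  let s := u.filter fun p => p.Prime ∧ ¬ p ∣ h
  have hs : ∀ p ∈ s, p.Prime ∧ ¬ p ∣ h := fun p hp => (Finset.mem_filter.mp hp).2
  have hq : 0 < ∏ p ∈ s, p := Finset.prod_pos fun p hp => (hs p hp).1.pos
  have hsum : -∑ p ∈ s, (1 / p : ℝ) < Real.log ε := by
    rw [Finset.sum_filter, neg_lt]
    simpa only [indicator, mem_ofPred_eq] using hu
  refine ⟨∏ p ∈ s, p, hq.ne', ?_⟩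
  rw [div_lt_iff₀ (by exact_mod_cast Nat.totient_pos.mpr hq)]
  refine (ncard_admissibleResidues_prod_le hs).trans_lt ?_
  exact mul_lt_mul_of_pos_right ((Real.lt_log_iff_exp_lt hε).mp hsum)
    (by exact_mod_cast Nat.totient_pos.mpr hq)

lemma natCast_mem_admissibleResidues {p q : ℕ} (hq : q ≠ 0) (hqp : q < p) (hp : p.Prime)
    (hph : (p + h).Prime) : (p : ZMod q) ∈ admissibleResidues q h := by
  refine ⟨(ZMod.isUnit_iff_coprime p q).mpr (Nat.coprime_of_lt_prime hq hqp hp), ?_⟩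
  rw [← Nat.cast_add, ZMod.isUnit_iff_coprime]
  exact Nat.coprime_of_lt_prime hq (by lia) hph

theorem hasVonMangoldtDensity_primePairs (hh : h ≠ 0) :
    HasVonMangoldtDensity {p | p.Prime ∧ (p + h).Prime} 0 := by
  refine .zero_of_forall_exists_lt fun ε hε => ?_
  obtain ⟨q, hq, hlt⟩ := exists_ncard_admissibleResidues_div_totient_lt hh hε
  have := NeZero.mk hq
  refine ⟨{n | (n : ZMod q) ∈ admissibleResidues q h}, _,
    hasVonMangoldtDensity_residueClasses fun a ha => ha.1, hlt, (finite_Iic q).subset ?_⟩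
  rintro p ⟨⟨hp, hph⟩, hnot⟩
  exact not_lt.mp fun hqp => hnot (natCast_mem_admissibleResidues hq hqp hp hph)

end PrimePairs

section Runs

lemma tsum_nat_add_le_mul_tsum_indicator {f : ℕ → ℝ} (hf : Antitone f) (hs : Summable f)
    {T : Set ℕ} {N : ℕ} (hT : ∀ j, ∃ i < N, j + i ∈ T) :
    ∑' j, f (j + N) ≤ N * ∑' j, T.indicator f j := by
  have f_nonneg : ∀ j, 0 ≤ T.indicator f j :=
    indicator_nonneg fun j _ => hf.le_of_tendsto hs.tendsto_atTop_zero j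
  have hshift (i : ℕ) : Summable fun j => T.indicator f (j + i) :=
    (hs.indicator T).comp_injective (add_left_injective i)
  have window_le (j : ℕ) : f (j + N) ≤ ∑ i ∈ Finset.range N, T.indicator f (j + i) := by
    obtain ⟨i, hi, hij⟩ := hT j
    calc f (j + N) ≤ f (j + i) := hf (by lia)
      _ = T.indicator f (j + i) := (indicator_of_mem hij f).symm
      _ ≤ ∑ i ∈ Finset.range N, T.indicator f (j + i) :=
        Finset.single_le_sum (f := fun i => T.indicator f (j + i)) (fun i _ => f_nonneg _)
          (Finset.mem_range.mpr hi)
  calc ∑' j, f (j + N) ≤ ∑' j, ∑ i ∈ Finset.range N, T.indicator f (j + i) :=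
        (hs.comp_injective (add_left_injective N)).tsum_le_tsum window_le
          (summable_sum fun i _ => hshift i)
    _ = ∑ i ∈ Finset.range N, ∑' j, T.indicator f (j + i) :=
        Summable.tsum_finsetSum fun i _ => hshift i
    _ ≤ ∑ _i ∈ Finset.range N, ∑' j, T.indicator f j := Finset.sum_le_sum fun i _ =>
        tsum_comp_le_tsum_of_inj (hs.indicator T) f_nonneg (add_left_injective i)
    _ = N * ∑' j, T.indicator f j := by rw [Finset.sum_const, Finset.card_range, nsmul_eq_mul]

variable {S : Set ℕ} {N : ℕ} {x : ℝ}

lemma nth_prime_injective : Function.Injective (Nat.nth Nat.Prime) :=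
  Nat.nth_injective Nat.infinite_setOfPred_prime

lemma vonMangoldtSeries_primes_eq_tsum_nth (x : ℝ) :
    vonMangoldtSeries {p | p.Prime} x = ∑' j, vonMangoldtTerm x (Nat.nth Nat.Prime j) := by
  rw [vonMangoldtSeries, ← nth_prime_injective.tsum_eq]
  · exact tsum_congr fun j => indicator_of_mem (Nat.prime_nth_prime j) _
  · rw [Nat.range_nth_of_infinite Nat.infinite_setOfPred_prime]
    exact support_indicator_subset

-- The prime `2` has to be left out, because `log 2 / 2 < log 3 / 3`.
lemma vonMangoldtTerm_nth_prime_succ_antitone (hx : 1 ≤ x) :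
    Antitone fun j => vonMangoldtTerm x (Nat.nth Nat.Prime (j + 1)) := by
  have large (j : ℕ) : Real.exp x⁻¹ ≤ Nat.nth Nat.Prime (j + 1) :=
    calc Real.exp x⁻¹ ≤ Real.exp 1 := Real.exp_le_exp.mpr (inv_le_one_of_one_le₀ hx)
      _ ≤ 3 := Real.exp_one_lt_three.le
      _ ≤ Nat.nth Nat.Prime (j + 1) := by
        exact_mod_cast (by lia : 3 ≤ j + 1 + 2).trans (Nat.add_two_le_nth_prime (j + 1))
  intro i j hij
  simp only [vonMangoldtTerm,
    ArithmeticFunction.vonMangoldt_apply_prime (Nat.prime_nth_prime _)]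
  refine Real.log_div_self_rpow_antitoneOn (by linarith) (large i) (large j) ?_
  exact_mod_cast Nat.nth_monotone Nat.infinite_setOfPred_prime (Nat.add_le_add_right hij 1)

lemma vonMangoldtSeries_primes_le (hS : ∀ j, ∃ i < N, Nat.nth Nat.Prime (j + i) ∈ S) (hx : 1 < x) :
    vonMangoldtSeries {p | p.Prime} x ≤
      ∑ j ∈ Finset.range (N + 1), vonMangoldtTerm 1 (Nat.nth Nat.Prime j) +
        N * vonMangoldtSeries S x := by
  have hsum : Summable fun j => vonMangoldtTerm x (Nat.nth Nat.Prime j) :=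
    (summable_vonMangoldtTerm hx).comp_injective nth_prime_injective
  have hinj : Function.Injective fun j => Nat.nth Nat.Prime (j + 1) :=
    nth_prime_injective.comp (add_left_injective 1)
  rw [vonMangoldtSeries_primes_eq_tsum_nth, ← hsum.sum_add_tsum_nat_add (N + 1)]
  refine add_le_add (Finset.sum_le_sum fun j _ => vonMangoldtTerm_anti_left _ hx.le) ?_
  calc ∑' j, vonMangoldtTerm x (Nat.nth Nat.Prime (j + (N + 1)))
      ≤ N * ∑' j, ((fun j => Nat.nth Nat.Prime (j + 1)) ⁻¹' S).indicator
          (fun j => vonMangoldtTerm x (Nat.nth Nat.Prime (j + 1))) j :=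
        tsum_nat_add_le_mul_tsum_indicator (vonMangoldtTerm_nth_prime_succ_antitone hx.le)
          ((summable_vonMangoldtTerm hx).comp_injective hinj) fun j => by
            simpa only [mem_preimage, add_right_comm j _ 1] using hS (j + 1)
    _ ≤ N * vonMangoldtSeries S x :=
        mul_le_mul_of_nonneg_left
          (tsum_comp_le_tsum_of_inj ((summable_vonMangoldtTerm hx).indicator S)
            (indicator_vonMangoldtTerm_nonneg S x) hinj) N.cast_nonneg

theorem exists_forall_lt_nth_prime_notMem (hS : HasVonMangoldtDensity S 0) (N : ℕ) :
    ∃ j, ∀ i < N, Nat.nth Nat.Prime (j + i) ∉ S := by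
  by_contra! hmem
  let C := ∑ j ∈ Finset.range (N + 1), vonMangoldtTerm 1 (Nat.nth Nat.Prime j)
  have hbound : Tendsto (fun x : ℝ => (x - 1) * C + N * ((x - 1) * vonMangoldtSeries S x))
      (𝓝[>] 1) (𝓝 0) := by
    have hinit : Tendsto (fun x : ℝ => (x - 1) * C) (𝓝[>] 1) (𝓝 0) :=
      tendsto_nhdsWithin_of_tendsto_nhds (Continuous.tendsto' (by fun_prop) _ _ (by simp))
    simpa using hinit.add (hS.const_mul (N : ℝ))
  refine one_pos.not_ge (le_of_tendsto_of_tendsto hasVonMangoldtDensity_primes hbound ?_)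
  filter_upwards [self_mem_nhdsWithin] with x hx
  rw [mul_left_comm, ← mul_add]
  exact mul_le_mul_of_nonneg_left (vonMangoldtSeries_primes_le hmem hx) (sub_nonneg.mpr hx.le)

end Runs

section NthPrime

lemma nthPrime_prime (n : ℕ) : (nthPrime n).Prime :=
  Nat.prime_nth_prime (n - 1)

lemma nthPrime_injOn : InjOn nthPrime (Ioi 0) := by
  intro a ha b hb hab
  have hpred : a - 1 = b - 1 := nth_prime_injective hab
  exact Nat.pred_inj ha hb hpred

lemma primeCounting_nthPrime {n : ℕ} (hn : 0 < n) : Nat.primeCounting (nthPrime n) = n := by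
  rw [Nat.primeCounting, Nat.primeCounting', nthPrime,
    Nat.count_nth_succ_of_infinite Nat.infinite_setOfPred_prime, Nat.sub_add_cancel hn]

theorem infinite_of_eventually_eq_add_of_prime_nthPrime_add {h : ℕ} (hh : h ≠ 0) {B : Set ℕ}
    (hB : ∀ᶠ n in atTop, ∃ k m, m ∈ B ∧ n = k + m ∧ (nthPrime k + h).Prime) :
    B.Infinite := by
  intro hfin
  obtain ⟨M, hM⟩ := hfin.bddAbove
  obtain ⟨n₀, hn₀⟩ := eventually_atTop.mp hB
  obtain ⟨j, hj⟩ := exists_forall_lt_nth_prime_notMem (hasVonMangoldtDensity_primePairs hh)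
    (n₀ + M + 1)
  obtain ⟨k, m, hm, hn, hprime⟩ := hn₀ (j + n₀ + M + 1) (by lia)
  have hmM : m ≤ M := hM hm
  refine hj (n₀ + M - m) (by lia) ⟨Nat.prime_nth_prime _, ?_⟩
  rwa [show j + (n₀ + M - m) = k - 1 by lia]

end NthPrime

theorem super_twin_prime_conjecture_implies_infinitude_general {h : ℕ} (hh : h ≠ 0)
    (hsum : ∀ᶠ n in atTop, ∃ k m : ℕ, 0 < k ∧ 0 < m ∧ n = k + m ∧
      (nthPrime k + h).Prime ∧ (nthPrime (nthPrime m) + h).Prime) :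
    {m : ℕ | 0 < m ∧ (nthPrime (nthPrime m) + h).Prime}.Infinite ∧
      {p : ℕ | p.Prime ∧ (p + h).Prime ∧ (Nat.primeCounting p).Prime}.Infinite := by
  have hinf : {m : ℕ | 0 < m ∧ (nthPrime (nthPrime m) + h).Prime}.Infinite := by
    refine infinite_of_eventually_eq_add_of_prime_nthPrime_add hh ?_
    filter_upwards [hsum] with n ⟨k, m, _, hm, hn, hk, hmh⟩
    exact ⟨k, m, ⟨hm, hmh⟩, hn, hk⟩
  have hpos (m : ℕ) : 0 < nthPrime m := (nthPrime_prime m).pos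
  have hinj : InjOn (nthPrime ∘ nthPrime) {m | 0 < m ∧ (nthPrime (nthPrime m) + h).Prime} :=
    (nthPrime_injOn.comp nthPrime_injOn fun m _ => hpos m).mono fun m hm => hm.1
  refine ⟨hinf, (hinf.image hinj).mono ?_⟩
  rintro _ ⟨m, ⟨-, hm⟩, rfl⟩
  refine ⟨nthPrime_prime _, hm, ?_⟩
  rw [Function.comp_apply, primeCounting_nthPrime (hpos m)]
  exact nthPrime_prime m

theorem super_twin_prime_conjecture_implies_infinitude
    (h : ∀ n : ℕ, 2 < n → ∃ k m : ℕ, 0 < k ∧ 0 < m ∧ n = k + m ∧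
      (nthPrime k + 2).Prime ∧ (nthPrime (nthPrime m) + 2).Prime) :
    {m : ℕ | 0 < m ∧ (nthPrime (nthPrime m) + 2).Prime}.Infinite ∧
      {p : ℕ | p.Prime ∧ (p + 2).Prime ∧ (Nat.primeCounting p).Prime}.Infinite :=
  super_twin_prime_conjecture_implies_infinitude_general two_ne_zero <|
    (eventually_gt_atTop 2).mono h
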